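/- Let P be a deletion-tolerant probability measure on M(X) and let B ⊆ X be Borel with 0 < μ_X(B) < ∞. Then P[ω(B) = 0 | ω|_{B^c}] > 0 P-almost surely. -/

import Mathlib

open MeasureTheory Metric Set Bornology Function
open scoped ENNReal NNReal unitInterval

noncomputable section

namespace BooleanModel

/-- The space of simple, locally finite point configurations on a metric space `X`
(realizations of simple counting measures on `X`). -/
def Config (X : Type*) [MetricSpace X] : Type _ :=
  {s : Set X // ∀ K : Set X, IsBounded K → (s ∩ K).Finite}

namespace Config

variable {X : Type*} [MetricSpace X]

/-- The σ-algebra on `Config X` generated by the evaluation (counting) maps `ω ↦ ω(B)`. -/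
instance instMeasurableSpace [MeasurableSpace X] : MeasurableSpace (Config X) :=
  MeasurableSpace.generateFrom
    {A | ∃ (B : Set X) (n : ℕ∞), MeasurableSet B ∧ A = {s : Config X | (s.1 ∩ B).encard = n}}

/-- The number of points of the configuration `s` lying in `B`. -/
def count (B : Set X) (s : Config X) : ℕ∞ := (s.1 ∩ B).encard

/-- Adding a point to a configuration (`ω + δ_y`). -/
def insertPt (y : X) (s : Config X) : Config X :=
  ⟨insert y s.1, by
    intro K hK
    refine ((s.2 K hK).insert y).subset ?_
    rintro z ⟨hz1, hz2⟩
    rcases Set.mem_insert_iff.1 hz1 with rfl | h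
    · exact Set.mem_insert _ _
    · exact Set.mem_insert_of_mem _ ⟨h, hz2⟩⟩

/-- The restriction `ω|_{B^c}` of a configuration to the complement of `B`. -/
def restrict (B : Set X) (s : Config X) : Config X :=
  ⟨s.1 ∩ Bᶜ, fun K hK => (s.2 K hK).subset fun z hz => ⟨hz.1.1, hz.2⟩⟩

/-- Push-forward of a configuration under an isometry of `X`. -/
def mapIso (γ : X ≃ᵢ X) (s : Config X) : Config X :=
  ⟨⇑γ '' s.1, by
    intro K hK
    have h1 : ⇑γ ⁻¹' K = ⇑γ.symm '' K := by
      ext z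
      constructor
      · intro hz; exact ⟨γ z, hz, γ.symm_apply_apply z⟩
      · rintro ⟨w, hw, rfl⟩; simpa using hw
    have h2 : ⇑γ '' s.1 ∩ K = ⇑γ '' (s.1 ∩ ⇑γ ⁻¹' K) := (Set.image_inter_preimage _ _ _).symm
    rw [h2]
    refine (s.2 _ ?_).image _
    rw [h1]
    exact γ.symm.isometry.lipschitz.isBounded_image hK⟩

end Config

section BasicDefs

variable {X : Type*} [MetricSpace X]

/-- The occupied set of the Boolean model with unit radii driven by `s`. -/
def occupied (s : Config X) : Set X := ⋃ x ∈ s.1, closedBall x 1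

/-- The vacant set of the Boolean model with unit radii driven by `s`. -/
def vacant (s : Config X) : Set X := (occupied s)ᶜ

/-- The collection of connected components of a set `S ⊆ X`. -/
def comps (S : Set X) : Set (Set X) := {C | ∃ x ∈ S, C = connectedComponentIn S x}

/-- The collection of unbounded connected components of `S`. -/
def ucomps (S : Set X) : Set (Set X) := {C | C ∈ comps S ∧ ¬IsBounded C}

/-- The number of connected components of `S`. -/
def numComps (S : Set X) : ℕ∞ := (comps S).encard

/-- `N_S`: the number of unbounded connected components of `S`. -/
def numUcomps (S : Set X) : ℕ∞ := (ucomps S).encard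

/-- A metric space is point-symmetric (the metric counterpart of being a Riemannian
symmetric space) if every point `x` admits a geodesic-reversing isometry fixing `x`,
i.e. an isometric point reflection around `x`. -/
def PointSymmetric (X : Type*) [MetricSpace X] : Prop :=
  ∀ x : X, ∃ invol : X ≃ᵢ X, invol x = x ∧ ∀ y : X, dist y (invol y) = 2 * dist x y

/-- The local connected component `C_S(y,r)`. -/
def localComp (S : Set X) (y : X) (r : ℝ) : Set X :=
  connectedComponentIn (S ∩ closedBall y r) y

end BasicDefs

section MeasureDefs

variable {X : Type*} [MetricSpace X] [MeasurableSpace X]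

/-- A measure on `Config X` is isometry invariant if it is preserved by the push-forward
action of every isometry of `X`. -/
def IsoInvariant (P : Measure (Config X)) : Prop :=
  ∀ γ : X ≃ᵢ X, Measure.map (Config.mapIso γ) P = P

/-- Every isometry-invariant event has probability `0` or `1`. -/
def ErgodicIso (P : Measure (Config X)) : Prop :=
  ∀ E : Set (Config X), MeasurableSet E →
    (∀ γ : X ≃ᵢ X, Config.mapIso γ ⁻¹' E = E) → P E = 0 ∨ P E = 1

/-- `P` is insertion-tolerant: for every Borel `B` with `0 < μ B < ∞`, the law of
`ω + δ_Y` with `Y` uniform in `B` independent of `ω` is absolutely continuous w.r.t. `P`. -/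
def InsertionTolerant (μ : Measure X) (P : Measure (Config X)) : Prop :=
  ∀ B : Set X, MeasurableSet B → 0 < μ B → μ B < ⊤ →
    Measure.map (fun p : Config X × X => Config.insertPt p.2 p.1)
      (P.prod ((μ B)⁻¹ • μ.restrict B)) ≪ P

/-- `P` is deletion-tolerant: for every Borel `B` with `0 < μ B < ∞`, the law of
`ω|_{B^c}` is absolutely continuous w.r.t. `P`. -/
def DeletionTolerant (μ : Measure X) (P : Measure (Config X)) : Prop :=
  ∀ B : Set X, MeasurableSet B → 0 < μ B → μ B < ⊤ →
    Measure.map (Config.restrict B) P ≪ P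

/-- `P` is the law of the Poisson point measure on `X` with intensity `ν`:
counts in disjoint Borel sets are independent with the correct Poisson distributions. -/
def IsPoisson (ν : Measure X) (P : Measure (Config X)) : Prop :=
  IsProbabilityMeasure P ∧
  (∀ B : Set X, MeasurableSet B → ν B < ⊤ → ∀ k : ℕ,
      P {s : Config X | Config.count B s = k} =
        ENNReal.ofReal (Real.exp (-(ν B).toReal) * (ν B).toReal ^ k / (Nat.factorial k))) ∧
  (∀ B : Set X, MeasurableSet B → ν B = ⊤ → P {s : Config X | (s.1 ∩ B).Infinite} = 1) ∧
  (∀ (n : ℕ) (B : Fin n → Set X) (k : Fin n → ℕ),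
      (∀ i, MeasurableSet (B i)) → (Pairwise fun i j => Disjoint (B i) (B j)) →
      P {s : Config X | ∀ i, Config.count (B i) s = k i} =
        ∏ i, P {s : Config X | Config.count (B i) s = k i})

end MeasureDefs

section PathDefs

variable {X : Type*} [MetricSpace X]

/-- The intrinsic distance between `x` and `y` within the set `S`: the infimum of the lengths
of continuous paths from `x` to `y` whose range is contained in `S`. -/
def pathDistIn (S : Set X) (x y : X) : ℝ≥0∞ :=
  ⨅ (γ : Path x y) (_ : Set.range ⇑γ ⊆ S), eVariationOn ⇑γ Set.univ

/-- Intrinsic distance within `S` between two subsets `A` and `B`. -/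
def setDistIn (S A B : Set X) : ℝ≥0∞ :=
  ⨅ (a : X) (_ : a ∈ A) (b : X) (_ : b ∈ B), pathDistIn S a b

/-- `y` is an `r`-trifurcation (marked by a point of `Y`) for the set `S`. -/
def IsTrifurcation (S : Set X) (Y : Set X) (r : ℝ) (y : X) : Prop :=
  y ∈ Y ∧ closedBall y 1 ⊆ S ∧ (∀ y' ∈ Y, y' ≠ y → 2 * r < dist y y') ∧
    3 ≤ numUcomps (connectedComponentIn S y \ localComp S y r)

end PathDefs

end BooleanModel
namespace BooleanModel

/-!
A nonnegative integrable `f` vanishes almost everywhere on the event that its conditional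
expectation is nonpositive, so almost surely `ω(B) = 0` implies `P[ω(B) = 0 | ω|_{Bᶜ}] > 0`.
Deletion tolerance lets us evaluate this implication at `ω|_{Bᶜ}` instead of `ω`. There the premise
always holds, while the conditional probability is unchanged since it only depends on `ω|_{Bᶜ}`.
-/

section CondExp

variable {Ω : Type*} {m m₀ : MeasurableSpace Ω} {P : Measure Ω} {f : Ω → ℝ}

theorem ae_condExp_pos_of_pos (hm : m ≤ m₀) [SigmaFinite (P.trim hm)] (hf : 0 ≤ᵐ[P] f)
    (hfi : Integrable f P) : ∀ᵐ ω ∂P, 0 < f ω → 0 < (P[f | m]) ω := by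
  let N : Set Ω := P[f | m] ⁻¹' Iic 0
  have hN : MeasurableSet[m] N := stronglyMeasurable_condExp.measurable measurableSet_Iic
  have hf_restrict : 0 ≤ᵐ[P.restrict N] f := ae_restrict_of_ae hf
  have integral_eq_zero : ∫ ω in N, f ω ∂P = 0 := by
    refine le_antisymm ?_ (integral_nonneg_of_ae hf_restrict)
    rw [← setIntegral_condExp hm hfi hN]
    exact setIntegral_nonpos (hm N hN) fun _ hω => hω
  have f_eq_zero : ∀ᵐ ω ∂P, ω ∈ N → f ω = 0 :=
    (ae_restrict_iff' (hm N hN)).1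
      ((setIntegral_eq_zero_iff_of_nonneg_ae hf_restrict hfi.integrableOn).1 integral_eq_zero)
  filter_upwards [f_eq_zero] with ω hω f_pos
  exact not_le.1 fun hωN => f_pos.ne' (hω hωN)

theorem condExp_comap_apply_of_idempotent {T : Ω → Ω} (hT : ∀ ω, T (T ω) = T ω) (ω : Ω) :
    (P[f | m₀.comap T]) (T ω) = (P[f | m₀.comap T]) ω :=
  stronglyMeasurable_condExp.factorsThrough (hT ω)

theorem ae_condExp_comap_pos_of_idempotent {T : Ω → Ω} (hTP : Measure.QuasiMeasurePreserving T P P)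
    [SigmaFinite (P.trim hTP.measurable.comap_le)] (hT : ∀ ω, T (T ω) = T ω)
    (hf : 0 ≤ᵐ[P] f) (hfi : Integrable f P) (hfT : ∀ᵐ ω ∂P, 0 < f (T ω)) :
    ∀ᵐ ω ∂P, 0 < (P[f | m₀.comap T]) ω := by
  filter_upwards [hTP.ae (ae_condExp_pos_of_pos hTP.measurable.comap_le hf hfi), hfT]
    with ω pos_of_pos f_pos
  rw [← condExp_comap_apply_of_idempotent hT]
  exact pos_of_pos f_pos

end CondExp

namespace Config

variable {X : Type*} [MetricSpace X] {B : Set X}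

theorem restrict_restrict_self (ω : Config X) : restrict B (restrict B ω) = restrict B ω :=
  Subtype.ext (inter_eq_left.2 inter_subset_right)

theorem count_restrict_self (ω : Config X) : count B (restrict B ω) = 0 :=
  encard_eq_zero.2 (disjoint_compl_left.mono_left inter_subset_right).inter_eq

variable [MeasurableSpace X]

theorem measurableSet_count_eq (hB : MeasurableSet B) (n : ℕ∞) :
    MeasurableSet {ω : Config X | count B ω = n} :=
  MeasurableSpace.measurableSet_generateFrom ⟨B, n, hB, rfl⟩

theorem measurable_restrict (hB : MeasurableSet B) : Measurable (restrict B) := by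
  refine measurable_generateFrom ?_
  rintro _ ⟨C, n, hC, rfl⟩
  have preimage_eq : restrict B ⁻¹' {ω | (ω.1 ∩ C).encard = n} = {ω | count (Bᶜ ∩ C) ω = n} := by
    simp only [preimage_ofPred_eq, restrict, count, inter_assoc]
  exact preimage_eq ▸ measurableSet_count_eq (hB.compl.inter hC) n

end Config

theorem conditional_deletion_positive_general
    {X : Type*} [MetricSpace X] [MeasurableSpace X] {P : Measure (Config X)} [IsFiniteMeasure P]
    {B : Set X} (hB : MeasurableSet B) (hPB : Measure.map (Config.restrict B) P ≪ P) :
    ∀ᵐ ω ∂P,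
      0 < (P[Set.indicator {ω' : Config X | Config.count B ω' = 0} (fun _ => (1 : ℝ))
            | MeasurableSpace.comap (Config.restrict B) Config.instMeasurableSpace]) ω := by
  refine ae_condExp_comap_pos_of_idempotent ⟨Config.measurable_restrict hB, hPB⟩
    Config.restrict_restrict_self (ae_of_all _ (indicator_nonneg fun _ _ => zero_le_one))
    ((integrable_const 1).indicator (Config.measurableSet_count_eq hB 0)) (ae_of_all _ fun ω => ?_)
  have count_eq_zero : Config.restrict B ω ∈ {ω' : Config X | Config.count B ω' = 0} :=
    Config.count_restrict_self ω
  rw [indicator_of_mem count_eq_zero]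
  exact one_pos

/-- **Lemma (conditional deletion), Lemma 7(b).**
If `P` is deletion-tolerant and `B` is Borel with `0 < μ B < ∞`, then
`P[ω(B) = 0 | ω|_{B^c}] > 0` `P`-almost surely. -/
theorem conditional_deletion_positive
    {X : Type*} [MetricSpace X] [ProperSpace X] [CompleteSpace X] [SimplyConnectedSpace X]
    [NoncompactSpace X] [MeasurableSpace X] [BorelSpace X] [Nonempty X]
    (hsym : PointSymmetric X)
    (μ : Measure X)
    (hμiso : ∀ γ : X ≃ᵢ X, Measure.map γ μ = μ)
    (hμball : ∀ (x : X) (r : ℝ), 0 < r → 0 < μ (closedBall x r) ∧ μ (closedBall x r) < ⊤)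
    (P : Measure (Config X)) [IsProbabilityMeasure P]
    (hPdel : DeletionTolerant μ P)
    (B : Set X) (hB : MeasurableSet B) (hB0 : 0 < μ B) (hB1 : μ B < ⊤) :
    ∀ᵐ ω ∂P,
      0 < (P[Set.indicator {ω' : Config X | Config.count B ω' = 0} (fun _ => (1 : ℝ))
            | MeasurableSpace.comap (Config.restrict B) Config.instMeasurableSpace]) ω :=
  conditional_deletion_positive_general hB (hPdel B hB hB0 hB1)

end BooleanModel
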